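/- arXiv:2303.17993 — 2 statements merged into one kernel-verified Lean document; each statement's English description precedes it below -/
import Mathlib

section
/- The J-ternary axiom (JT2) holds for the triple product on 𝔤₁: for all A ∈ 𝔤₂ and X, Y, Z ∈ 𝔤₁, A•⟨X,Y,Z⟩ = ⟨A•X, Y, Z⟩ − ⟨X, A•Y, Z⟩ + ⟨X, Y, A•Z⟩. -/
/-!
Put `D = ad ⁅A, f⁆`. Since `D` is a derivation, (JT2) amounts to `D ⁅Y, f⁆ = -⁅D Y, f⁆`
(`lie_lie_eq_neg`). That identity follows from two applications of the Jacobi identity together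
with `⁅A, Y⁆ = 0` and `⁅⁅Y, f⁆, f⁆ = 0`; these brackets have weights `3` and `-3`, which do not occur
in a 5-grading (`eq_zero_of_weight`).
-/

/-- The action `A•X = ⁅⁅A,f⁆,X⁆` of `𝔤₂` on `𝔤₁`. -/
def jordanAct {g : Type*} [LieRing g] (f A X : g) : g := ⁅⁅A, f⁆, X⁆

/-- The triple product `⟨X,Y,Z⟩ = ½⁅⁅X,⁅Y,f⁆⁆,Z⁆` on `𝔤₁`. -/
def jTriple (k : Type*) {g : Type*} [Field k] [LieRing g] [LieAlgebra k g]
    (f X Y Z : g) : g := (2 : k)⁻¹ • ⁅⁅X, ⁅Y, f⁆⁆, Z⁆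

/-- A vector of weight `μ ∉ {-2, -1, 0, 1, 2}` vanishes: `ad H` is annihilated by the polynomial
`t (t² - 1) (t² - 4) = t⁵ - 5 t³ + 4 t`, and this has no root at `μ`. -/
theorem eq_zero_of_weight
    {k g : Type*} [Field k] [LieRing g] [LieAlgebra k g] {H : g}
    (hgrade : ∀ x : g, ∃ a b c d e' : g,
      ⁅H, a⁆ = (-2 : k) • a ∧ ⁅H, b⁆ = (-1 : k) • b ∧ ⁅H, c⁆ = 0 ∧
      ⁅H, d⁆ = (1 : k) • d ∧ ⁅H, e'⁆ = (2 : k) • e' ∧ x = a + b + c + d + e')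
    {μ : k} (hμ : μ ^ 5 - 5 * μ ^ 3 + 4 * μ ≠ 0) {x : g} (hx : ⁅H, x⁆ = μ • x) : x = 0 := by
  obtain ⟨a, b, c, d, e', ha, hb, hc, hd, he, hsum⟩ := hgrade x
  have h1 : ⁅H, x⁆ = ⁅H, a + b + c + d + e'⁆ := congrArg _ hsum
  have h3 := congrArg (fun y => ⁅H, ⁅H, y⁆⁆) h1
  have h5 := congrArg (fun y => ⁅H, ⁅H, y⁆⁆) h3
  simp only [hx, lie_add, lie_smul, ha, hb, hc, hd, he, lie_zero] at h1 h3 h5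
  have key : (μ ^ 5 - 5 * μ ^ 3 + 4 * μ) • x = 0 := by
    linear_combination (norm := module) h5 - (5 : k) • h3 + (4 : k) • h1
  exact (smul_eq_zero.mp key).resolve_left hμ

/-- `ad ⁅A, f⁆` anticommutes with `ad f` on `Y`, provided `⁅A, Y⁆` and `⁅⁅Y, f⁆, f⁆` vanish. -/
theorem lie_lie_eq_neg {g : Type*} [LieRing g] {f A Y : g}
    (hAY : ⁅A, Y⁆ = 0) (hYf : ⁅⁅Y, f⁆, f⁆ = 0) :
    ⁅⁅A, f⁆, ⁅Y, f⁆⁆ = -⁅⁅⁅A, f⁆, Y⁆, f⁆ := by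
  have h1 : ⁅A, ⁅Y, f⁆⁆ = -⁅⁅A, f⁆, Y⁆ := by
    rw [leibniz_lie, hAY, zero_lie, zero_add, lie_skew]
  have h2 : ⁅f, ⁅Y, f⁆⁆ = 0 := by rw [← lie_skew, hYf, neg_zero]
  rw [lie_lie, h2, lie_zero, zero_sub, h1, lie_neg, neg_neg, lie_skew]

/-- Axiom (JT2) for the `J`-ternary structure on `(𝔤₂, 𝔤₁)` coming from a
5-graded Lie algebra with an `sl₂`-triple `(h, e, f)`. -/
theorem jternary_JT2
    (k g : Type*) [Field k] [CharZero k] [LieRing g] [LieAlgebra k g]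
    (H E Fg : g)
    (hHE : ⁅H, E⁆ = (2 : k) • E) (hHF : ⁅H, Fg⁆ = (-2 : k) • Fg)
    (hEF : ⁅E, Fg⁆ = H)
    (hgrade : ∀ x : g, ∃ a b c d e' : g,
      ⁅H, a⁆ = (-2 : k) • a ∧ ⁅H, b⁆ = (-1 : k) • b ∧ ⁅H, c⁆ = 0 ∧
      ⁅H, d⁆ = (1 : k) • d ∧ ⁅H, e'⁆ = (2 : k) • e' ∧ x = a + b + c + d + e') :
    ∀ A X Y Z : g, ⁅H, A⁆ = (2 : k) • A →
      ⁅H, X⁆ = (1 : k) • X → ⁅H, Y⁆ = (1 : k) • Y → ⁅H, Z⁆ = (1 : k) • Z →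
      jordanAct Fg A (jTriple k Fg X Y Z)
        = jTriple k Fg (jordanAct Fg A X) Y Z
          - jTriple k Fg X (jordanAct Fg A Y) Z
          + jTriple k Fg X Y (jordanAct Fg A Z) := by
  intro A X Y Z hA hX hY hZ
  have hAY : ⁅A, Y⁆ = 0 := by
    refine eq_zero_of_weight hgrade (μ := 3) (by norm_num) ?_
    rw [leibniz_lie, hA, hY, smul_lie, lie_smul]
    module
  have hYF : ⁅⁅Y, Fg⁆, Fg⁆ = 0 := by
    refine eq_zero_of_weight hgrade (μ := -3) (by norm_num) ?_
    rw [leibniz_lie, leibniz_lie H Y Fg, hY, hHF]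
    simp only [add_lie, smul_lie, lie_smul]
    module
  unfold jordanAct jTriple
  rw [lie_smul, leibniz_lie, leibniz_lie _ X, lie_lie_eq_neg hAY hYF]
  simp only [add_lie, lie_neg, neg_lie]
  module
end

section
/- The J-ternary axiom (JT5) holds for the triple product on 𝔤₁: for all X, Y, Z, W ∈ 𝔤₁, ⟨⟨X,Y,Z⟩ | W⟩ + ⟨Z | ⟨X,Y,W⟩⟩ = ⟨X | ⟨Z|W⟩•Y⟩. -/
/-- The pairing `⟨X|Y⟩ = ½⁅X,Y⁆ ∈ 𝔤₂` on `𝔤₁`. -/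
def jPair (k : Type*) {g : Type*} [Field k] [LieRing g] [LieAlgebra k g]
    (X Y : g) : g := (2 : k)⁻¹ • ⁅X, Y⁆

/-- In a 5-graded Lie algebra, an eigenvector of `ad h` of degree `3` vanishes. -/
lemma eq_zero_of_degree_three
    (k : Type*) {g : Type*} [Field k] [CharZero k] [LieRing g] [LieAlgebra k g] {H : g}
    (hgrade : ∀ x : g, ∃ a b c d e' : g,
      ⁅H, a⁆ = (-2 : k) • a ∧ ⁅H, b⁆ = (-1 : k) • b ∧ ⁅H, c⁆ = 0 ∧
      ⁅H, d⁆ = (1 : k) • d ∧ ⁅H, e'⁆ = (2 : k) • e' ∧ x = a + b + c + d + e')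
    {v : g} (hv : ⁅H, v⁆ = (3 : k) • v) : v = 0 := by
  obtain ⟨a, b, c, d, e, ha, hb, hc, hd, he, h0⟩ := hgrade v
  have h1 := congrArg (fun x => ⁅H, x⁆) h0
  have h2 := congrArg (fun x => ⁅H, x⁆) h1
  have h3 := congrArg (fun x => ⁅H, x⁆) h2
  have h4 := congrArg (fun x => ⁅H, x⁆) h3
  have h5 := congrArg (fun x => ⁅H, x⁆) h4
  simp only [lie_add, lie_smul, hv, ha, hb, hc, hd, he, lie_zero] at h1 h3 h5
  -- The combination realises `t(t² - 1)(t² - 4) = t⁵ - 5t³ + 4t` applied to `ad h`.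
  have key : (120 : k) • v = 0 := by
    linear_combination (norm := module) h5 - (5 : k) • h3 + (4 : k) • h1
  exact (smul_eq_zero.mp key).resolve_left (by norm_num)

/-- Axiom (JT5) for the `J`-ternary structure on `(𝔤₂, 𝔤₁)` coming from a
5-graded Lie algebra with an `sl₂`-triple `(h, e, f)`. -/
theorem jternary_JT5
    (k g : Type*) [Field k] [CharZero k] [LieRing g] [LieAlgebra k g]
    (H E Fg : g)
    (hHE : ⁅H, E⁆ = (2 : k) • E) (hHF : ⁅H, Fg⁆ = (-2 : k) • Fg)
    (hEF : ⁅E, Fg⁆ = H)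
    (hgrade : ∀ x : g, ∃ a b c d e' : g,
      ⁅H, a⁆ = (-2 : k) • a ∧ ⁅H, b⁆ = (-1 : k) • b ∧ ⁅H, c⁆ = 0 ∧
      ⁅H, d⁆ = (1 : k) • d ∧ ⁅H, e'⁆ = (2 : k) • e' ∧ x = a + b + c + d + e') :
    ∀ X Y Z W : g,
      ⁅H, X⁆ = (1 : k) • X → ⁅H, Y⁆ = (1 : k) • Y →
      ⁅H, Z⁆ = (1 : k) • Z → ⁅H, W⁆ = (1 : k) • W →
      jPair k (jTriple k Fg X Y Z) W + jPair k Z (jTriple k Fg X Y W)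
        = jPair k X (jordanAct Fg (jPair k Z W) Y) := by
  intro X Y Z W hX hY hZ hW
  have hA : ⁅H, ⁅Z, W⁆⁆ = (2 : k) • ⁅Z, W⁆ := by
    rw [leibniz_lie, hZ, hW, smul_lie, lie_smul]
    module
  have h3 : ∀ V : g, ⁅H, V⁆ = (1 : k) • V → ⁅V, ⁅Z, W⁆⁆ = 0 := fun V hV => by
    refine eq_zero_of_degree_three k hgrade ?_
    rw [leibniz_lie, hV, hA, smul_lie, lie_smul]
    module
  have hD : ⁅⁅X, ⁅Y, Fg⁆⁆, ⁅Z, W⁆⁆ = ⁅X, ⁅⁅⁅Z, W⁆, Fg⁆, Y⁆⁆ := by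
    rw [lie_lie X, h3 X hX, lie_zero, sub_zero, lie_lie Y, h3 Y hY, lie_zero, sub_zero,
      ← lie_skew Y, ← lie_skew Fg, neg_lie, neg_neg]
  simp only [jPair, jTriple, jordanAct, smul_lie, lie_smul]
  rw [← hD, leibniz_lie ⁅X, ⁅Y, Fg⁆⁆ Z W]
  module
end
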